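/- Let x : [0,1] → ℝ be a nonconstant continuous function that admits the Hurst roughness exponent H and for which ξ := lim_{n→∞} ξ_n exists. If H ≤ 1/2, then H ≤ 1 − ξ. -/

import Mathlib

/-!
Splitting a dyadic increment `a + b` into its two halves `a` and `b`, the parallelogram law
`2 * (a ^ 2 + b ^ 2) = (a + b) ^ 2 + (a - b) ^ 2` shows that refining the grid turns `2 ^ n` times
the quadratic variation into itself plus the squared Faber–Schauder coefficients of generation
`n`. Hence `s_n ^ 2 + (x 1 - x 0) ^ 2 = 2 ^ n * V_n^{(2)}`. For `p > 1 / H ≥ 2` the power mean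
inequality bounds `V_n^{(2)}` by `V_n^{(p)}`, and `V_n^{(p)} → 0` then forces
`s_n ≤ 2 ^ (n * (1 - 1 / p))` for large `n`, so `ξ ≤ 1 - 1 / p`; now let `p` decrease to `1 / H`.
-/

open Filter Finset

noncomputable section

/-- The `n`-th dyadic `p`-th variation of `x`. -/
def dyadicVar (x : ℝ → ℝ) (p : ℝ) (n : ℕ) : ℝ :=
  ∑ k ∈ Finset.range (2 ^ n), |x (((k : ℝ) + 1) / 2 ^ n) - x ((k : ℝ) / 2 ^ n)| ^ p

/-- `x` is nonconstant on `[0,1]`. -/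
def Nonconstant (x : ℝ → ℝ) : Prop :=
  ∃ s ∈ Set.Icc (0 : ℝ) 1, ∃ t ∈ Set.Icc (0 : ℝ) 1, x s ≠ x t

/-- `x` admits the Hurst roughness exponent `H ∈ (0,1]`. -/
def HasHurstExponent (x : ℝ → ℝ) (H : ℝ) : Prop :=
  0 < H ∧ H ≤ 1 ∧
  (∀ p : ℝ, 1 / H < p → Tendsto (dyadicVar x p) atTop (nhds 0)) ∧
  (∀ p : ℝ, 0 < p → p < 1 / H → Tendsto (dyadicVar x p) atTop atTop)

/-- Faber–Schauder coefficient `θ_{m,k}` of `x`. -/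
def fsCoeff (x : ℝ → ℝ) (m k : ℕ) : ℝ :=
  2 ^ ((m : ℝ) / 2) *
    (2 * x ((2 * (k : ℝ) + 1) / 2 ^ (m + 1)) - x ((k : ℝ) / 2 ^ m) - x (((k : ℝ) + 1) / 2 ^ m))

/-- `s_n = (∑_{m<n} ∑_{k<2^m} θ_{m,k}²)^{1/2}`. -/
def sSeq (x : ℝ → ℝ) (n : ℕ) : ℝ :=
  Real.sqrt (∑ m ∈ Finset.range n, ∑ k ∈ Finset.range (2 ^ m), fsCoeff x m k ^ 2)

/-- `ξ_n = (1/n) log₂ s_n`. -/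
def xiSeq (x : ℝ → ℝ) (n : ℕ) : ℝ := Real.logb 2 (sSeq x n) / n

/-- A nondecreasing function `ϱ : ℕ → [1,∞)` is subexponential if `(1/n) log ϱ(n) → 0`. -/
def Subexponential (ϱ : ℕ → ℝ) : Prop :=
  Monotone ϱ ∧ (∀ n, 1 ≤ ϱ n) ∧ Tendsto (fun n : ℕ => Real.log (ϱ n) / n) atTop (nhds 0)

/-- The quantity `2^{-(n-1)} ∑_{k<2^{n-1}} (∑_{m<n} 2^m θ²_{m,⌊2^{m-n+1}k⌋})^{p/2}`;
note that `⌊2^{m-n+1}k⌋ = k / 2^{n-1-m}` (natural number division). -/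
def RJquantity (x : ℝ → ℝ) (p : ℝ) (n : ℕ) : ℝ :=
  (∑ k ∈ Finset.range (2 ^ (n - 1)),
      (∑ m ∈ Finset.range n, 2 ^ m * fsCoeff x m (k / 2 ^ (n - 1 - m)) ^ 2) ^ (p / 2)) /
    2 ^ (n - 1)

/-- The reverse Jensen condition on the Faber–Schauder coefficients of `x`. -/
def ReverseJensen (x : ℝ → ℝ) : Prop :=
  ∀ p : ℝ, 1 ≤ p → ∃ np : ℕ, ∃ ϱ : ℕ → ℝ, Subexponential ϱ ∧
    ∀ n : ℕ, np ≤ n →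
      (ϱ n)⁻¹ * sSeq x n ^ p ≤ RJquantity x p n ∧ RJquantity x p n ≤ ϱ n * sSeq x n ^ p

lemma sum_range_two_mul {M : Type*} [AddCommMonoid M] (f : ℕ → M) (N : ℕ) :
    ∑ k ∈ range (2 * N), f k = ∑ k ∈ range N, (f (2 * k) + f (2 * k + 1)) := by
  induction N with
  | zero => simp
  | succ N ih => rw [mul_add_one, sum_range_succ, sum_range_succ, sum_range_succ, ih, add_assoc]

lemma sum_abs_rpow_rpow_div_le {ι : Type*} (s : Finset ι) (f : ι → ℝ) {p q : ℝ} (hq : 0 < q)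
    (hqp : q ≤ p) :
    (∑ i ∈ s, |f i| ^ q) ^ (p / q) ≤ (#s : ℝ) ^ (p / q - 1) * ∑ i ∈ s, |f i| ^ p := by
  have h := Real.rpow_sum_le_const_mul_sum_rpow_of_nonneg s (f := fun i => |f i| ^ q)
    ((one_le_div hq).2 hqp) fun i _ => Real.rpow_nonneg (abs_nonneg (f i)) q
  simpa only [← Real.rpow_mul (abs_nonneg _), mul_div_cancel₀ p hq.ne'] using h

/-- The increment of `x` over the `k`-th dyadic interval of generation `n`, counted from `k = 0`;
these are the terms of the dyadic variations. -/
def dyadicIncr (x : ℝ → ℝ) (n k : ℕ) : ℝ :=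
  x (((k : ℝ) + 1) / 2 ^ n) - x ((k : ℝ) / 2 ^ n)

section Dyadic

variable (x : ℝ → ℝ) (n k : ℕ)

lemma dyadicVar_eq_sum_dyadicIncr (p : ℝ) :
    dyadicVar x p n = ∑ k ∈ range (2 ^ n), |dyadicIncr x n k| ^ p :=
  rfl

lemma dyadicVar_two : dyadicVar x 2 n = ∑ k ∈ range (2 ^ n), dyadicIncr x n k ^ 2 := by
  simp only [dyadicVar_eq_sum_dyadicIncr, Real.rpow_two, sq_abs]

lemma dyadicVar_nonneg (p : ℝ) : 0 ≤ dyadicVar x p n :=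
  sum_nonneg fun _ _ => Real.rpow_nonneg (abs_nonneg _) p

lemma dyadicIncr_succ_two_mul :
    dyadicIncr x (n + 1) (2 * k) = x ((2 * (k : ℝ) + 1) / 2 ^ (n + 1)) - x ((k : ℝ) / 2 ^ n) := by
  have left : 2 * (k : ℝ) / 2 ^ (n + 1) = k / 2 ^ n := by field_simp; ring
  simp only [dyadicIncr, Nat.cast_mul, Nat.cast_ofNat, left]

lemma dyadicIncr_succ_two_mul_add_one :
    dyadicIncr x (n + 1) (2 * k + 1) =
      x (((k : ℝ) + 1) / 2 ^ n) - x ((2 * (k : ℝ) + 1) / 2 ^ (n + 1)) := by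
  have right : (2 * (k : ℝ) + 1 + 1) / 2 ^ (n + 1) = (k + 1) / 2 ^ n := by field_simp; ring
  simp only [dyadicIncr, Nat.cast_add, Nat.cast_mul, Nat.cast_ofNat, Nat.cast_one, right]

lemma dyadicIncr_eq_add :
    dyadicIncr x n k = dyadicIncr x (n + 1) (2 * k) + dyadicIncr x (n + 1) (2 * k + 1) := by
  rw [dyadicIncr_succ_two_mul, dyadicIncr_succ_two_mul_add_one, dyadicIncr]
  ring

lemma fsCoeff_eq_mul_sub :
    fsCoeff x n k =
      2 ^ ((n : ℝ) / 2) * (dyadicIncr x (n + 1) (2 * k) - dyadicIncr x (n + 1) (2 * k + 1)) := by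
  rw [dyadicIncr_succ_two_mul, dyadicIncr_succ_two_mul_add_one, fsCoeff]
  ring

lemma fsCoeff_sq :
    fsCoeff x n k ^ 2 =
      2 ^ n * (dyadicIncr x (n + 1) (2 * k) - dyadicIncr x (n + 1) (2 * k + 1)) ^ 2 := by
  rw [fsCoeff_eq_mul_sub, mul_pow, ← Real.rpow_mul_natCast zero_le_two, Nat.cast_ofNat,
    div_mul_cancel₀ _ two_ne_zero, Real.rpow_natCast]

lemma two_pow_succ_mul_dyadicVar_two :
    2 ^ (n + 1) * dyadicVar x 2 (n + 1) =
      2 ^ n * dyadicVar x 2 n + ∑ k ∈ range (2 ^ n), fsCoeff x n k ^ 2 := by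
  rw [dyadicVar_two, dyadicVar_two, pow_succ' (2 : ℕ) n, sum_range_two_mul, mul_sum, mul_sum,
    ← sum_add_distrib]
  refine sum_congr rfl fun k _ => ?_
  rw [fsCoeff_sq, dyadicIncr_eq_add x n k]
  ring

lemma sSeq_nonneg : 0 ≤ sSeq x n :=
  Real.sqrt_nonneg _

lemma sSeq_sq : sSeq x n ^ 2 = ∑ m ∈ range n, ∑ k ∈ range (2 ^ m), fsCoeff x m k ^ 2 :=
  Real.sq_sqrt (by positivity)

lemma sSeq_sq_add_sq : sSeq x n ^ 2 + (x 1 - x 0) ^ 2 = 2 ^ n * dyadicVar x 2 n := by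
  rw [sSeq_sq]
  induction n with
  | zero => simp [dyadicVar]
  | succ n ih => rw [sum_range_succ, two_pow_succ_mul_dyadicVar_two, ← ih, add_right_comm]

lemma sSeq_sq_le : sSeq x n ^ 2 ≤ 2 ^ n * dyadicVar x 2 n :=
  sSeq_sq_add_sq x n ▸ le_add_of_nonneg_right (sq_nonneg _)

end Dyadic

section Bounds

variable (x : ℝ → ℝ) {p q : ℝ} (n : ℕ)

lemma dyadicVar_rpow_div_le (hq : 0 < q) (hqp : q ≤ p) :
    dyadicVar x q n ^ (p / q) ≤ (2 ^ n : ℝ) ^ (p / q - 1) * dyadicVar x p n := by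
  simpa [dyadicVar_eq_sum_dyadicIncr] using
    sum_abs_rpow_rpow_div_le (range (2 ^ n)) (dyadicIncr x n) hq hqp

lemma sSeq_rpow_le (hp : 2 ≤ p) :
    sSeq x n ^ p ≤ (2 ^ n : ℝ) ^ (p - 1) * dyadicVar x p n := by
  have two_pow_pos : (0 : ℝ) < 2 ^ n := by positivity
  calc sSeq x n ^ p = (sSeq x n ^ 2) ^ (p / 2) := by
        rw [← Real.rpow_natCast_mul (sSeq_nonneg x n), Nat.cast_ofNat,
          mul_div_cancel₀ p two_ne_zero]
    _ ≤ (2 ^ n * dyadicVar x 2 n) ^ (p / 2) :=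
        Real.rpow_le_rpow (sq_nonneg _) (sSeq_sq_le x n) (by linarith)
    _ = (2 ^ n : ℝ) ^ (p / 2) * dyadicVar x 2 n ^ (p / 2) :=
        Real.mul_rpow two_pow_pos.le (dyadicVar_nonneg x n 2)
    _ ≤ (2 ^ n : ℝ) ^ (p / 2) * ((2 ^ n : ℝ) ^ (p / 2 - 1) * dyadicVar x p n) := by
        gcongr
        exact dyadicVar_rpow_div_le x n two_pos hp
    _ = (2 ^ n : ℝ) ^ (p - 1) * dyadicVar x p n := by
        rw [← mul_assoc, ← Real.rpow_add two_pow_pos]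
        congr 2
        ring

variable {x n}

lemma sSeq_le_two_rpow (hp : 2 ≤ p) (hV : dyadicVar x p n ≤ 1) :
    sSeq x n ≤ 2 ^ (n * (1 - 1 / p)) := by
  have p_pos : 0 < p := by linarith
  rw [← Real.rpow_le_rpow_iff (sSeq_nonneg x n) (by positivity) p_pos]
  calc sSeq x n ^ p ≤ (2 ^ n : ℝ) ^ (p - 1) * dyadicVar x p n := sSeq_rpow_le x n hp
    _ ≤ (2 ^ n : ℝ) ^ (p - 1) := mul_le_of_le_one_right (by positivity) hV
    _ = ((2 : ℝ) ^ (n * (1 - 1 / p))) ^ p := by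
        rw [← Real.rpow_natCast_mul zero_le_two, ← Real.rpow_mul zero_le_two]
        congr 1
        field_simp

lemma xiSeq_le_of_sSeq_le_two_rpow {c : ℝ} (hc : 0 ≤ c) (hs : sSeq x n ≤ 2 ^ (n * c)) :
    xiSeq x n ≤ c := by
  refine div_le_of_le_mul₀ n.cast_nonneg hc ?_
  rw [mul_comm]
  rcases (sSeq_nonneg x n).eq_or_lt with s_zero | s_pos
  · -- The junk value `Real.logb 2 0 = 0` stands in for `-∞`.
    rw [← s_zero, Real.logb_zero]
    positivity
  · exact (Real.logb_le_iff_le_rpow one_lt_two s_pos).2 hs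

lemma xiSeq_le_of_dyadicVar_le_one (hp : 2 ≤ p) (hV : dyadicVar x p n ≤ 1) :
    xiSeq x n ≤ 1 - 1 / p := by
  refine xiSeq_le_of_sSeq_le_two_rpow ?_ (sSeq_le_two_rpow hp hV)
  rw [sub_nonneg, div_le_one (by linarith)]
  linarith

end Bounds

theorem stmt6_general (x : ℝ → ℝ) {H : ℝ} (hH : 0 < H) (hhalf : H ≤ 1 / 2)
    (hV : ∀ p : ℝ, 1 / H < p → Tendsto (dyadicVar x p) atTop (nhds 0)) {h : ℝ} (hh : h < H) :
    ∀ᶠ n in atTop, xiSeq x n ≤ 1 - h := by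
  obtain ⟨r, hr, r_lt_H⟩ := exists_between (max_lt hh hH)
  obtain ⟨h_lt_r, r_pos⟩ := max_lt_iff.1 hr
  have two_le : 2 ≤ 1 / r := by rw [le_div_iff₀ r_pos]; linarith
  have hVr : Tendsto (dyadicVar x (1 / r)) atTop (nhds 0) :=
    hV (1 / r) (one_div_lt_one_div_of_lt r_pos r_lt_H)
  filter_upwards [hVr.eventually_le_const one_pos] with n hn
  calc xiSeq x n ≤ 1 - 1 / (1 / r) := xiSeq_le_of_dyadicVar_le_one two_le hn
    _ = 1 - r := by rw [one_div_one_div]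
    _ ≤ 1 - h := by linarith

theorem stmt6 (x : ℝ → ℝ) (hx : ContinuousOn x (Set.Icc 0 1)) (hnc : Nonconstant x)
    (H ξ : ℝ) (hH : HasHurstExponent x H) (hξ : Tendsto (xiSeq x) atTop (nhds ξ))
    (hhalf : H ≤ 1 / 2) : H ≤ 1 - ξ := by
  exact le_of_forall_lt_imp_le_of_dense fun h hh =>
    le_sub_comm.1 (le_of_tendsto hξ (stmt6_general x hH.1 hhalf hH.2.2.1 hh))
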